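/- arXiv:1902.04372 — 2 statements merged into one kernel-verified Lean document; each statement's English description precedes it below -/
import Mathlib

section
/- Let q be a prime power with q > 3, m ≥ q, write m - 1 = a(q-1) + b with a ≥ 1 and 0 ≤ b ≤ q-2, and let n = (q^m-1)/(q-1). Suppose 1 ≤ i ≤ n-1 is a q-cyclotomic coset leader modulo n with q-adic expansion i = Σ_{ℓ=0}^{m-1} i_ℓ q^ℓ. Then i_{m-1} = 0; moreover, setting ε = a+1 if b = q-2 and ε = a otherwise, if i_ℓ = q-1 for all m-1-ε ≤ ℓ ≤ m-2, then 1 ≤ i_{ℓ-1} ≤ i_ℓ for all 1 ≤ ℓ ≤ m-2. -/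
/-- Key value of the quotient of a rotation. -/
theorem aux_f (q Q N i P c s f y : ℤ) (hq : 4 ≤ q) (hP : 1 ≤ P) (hQ : Q = q * P)
    (hN : (q - 1) * N = Q - 1) (hi : Q - P ≤ i) (hc : 1 ≤ c) (hc2 : c ≤ q - 1)
    (hs : 0 ≤ s) (hs2 : s < Q) (h : c * Q + s = f * (Q + N) + y) (hy : i ≤ y)
    (hy2 : y < Q + N) : f = c - 1 := by
  have hNP : P ≤ N := by nlinarith
  have h1 : f ≤ c - 1 := by
    by_contra hh
    have : c ≤ f := by omega
    nlinarith [mul_nonneg (sub_nonneg.2 this) (by linarith : 0 ≤ Q + N),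
      mul_nonneg (sub_nonneg.2 hc) (by linarith : 0 ≤ N)]
  have h2 : c - 1 ≤ f := by
    by_contra hh
    have : f ≤ c - 2 := by omega
    nlinarith [mul_nonneg (sub_nonneg.2 this) (by linarith : 0 ≤ Q + N),
      mul_nonneg (sub_nonneg.2 hc2) (by linarith : 0 ≤ N)]
  omega

set_option maxHeartbeats 1000000 in
theorem aux_nz (q Q N i B : ℤ) (e : ℕ) (he : 1 ≤ e) (hq : 4 ≤ q) (hB : 1 ≤ B)
    (hQ : Q = B * q ^ e) (hN : (q - 1) * N = Q - 1) (hi : Q - B ≤ i)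
    (c s f y : ℕ → ℤ) (hc0 : ∀ j, 0 ≤ c j) (hc1 : ∀ j, c j ≤ q - 1)
    (hs0 : ∀ j, 0 ≤ s j) (hs1 : ∀ j, s j < Q)
    (hsp : ∀ j, c j * Q + s j = f j * (Q + N) + y j)
    (hy0 : ∀ j, i ≤ y j) (hy1 : ∀ j, y j < Q + N)
    (hrec : ∀ j, c (j+1) * Q + s (j+1) = q * s j + c j) :
    (∀ j, 1 ≤ c j → c (j+1) ≤ c j) ∧
    ∀ j0, c j0 = 0 → ∀ j : ℕ, 1 ≤ j → (j : ℤ) < (q - 1) * e → c (j0 + j) ≠ 0 := by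
  obtain ⟨d, rfl⟩ : ∃ d, e = d + 1 := ⟨e - 1, by omega⟩
  have hqd : 1 ≤ q ^ d := one_le_pow₀ (by linarith)
  have hBP : B ≤ B * q ^ d := by nlinarith
  have hQP : Q = q * (B * q ^ d) := by rw [hQ]; ring
  have hNP : B * q ^ d ≤ N := by nlinarith
  have hQN : 0 < Q + N := by nlinarith
  have hf : ∀ j, 1 ≤ c j → f j = c j - 1 := fun j hj =>
    aux_f q Q N i (B * q ^ d) (c j) (s j) (f j) (y j) hq (by linarith) hQP hN (by linarith)
      hj (hc1 j) (hs0 j) (hs1 j) (hsp j) (hy0 j) (hy1 j)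
  -- the next rotation
  have hR : ∀ j, 1 ≤ c j → c (j+1) * Q + s (j+1) = q * y j + (c j - q) * (Q + N) := by
    intro j hj
    have h1 := hsp j
    rw [hf j hj] at h1
    rw [hrec j]
    linear_combination q * h1 + (c j) * hN
  -- universal lower bound
  have hlow : ∀ j, 1 ≤ c j →
      (c j - 1) * (Q + N) + 1 - q * B ≤ c (j+1) * Q + s (j+1) := by
    intro j hj
    rw [hR j hj]
    have := hy0 j
    nlinarith
  have hzero : ∀ j, c j = 0 →
      (q - 1) * (Q + N) + 1 - q * B ≤ c (j+1) * Q + s (j+1) := by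
    intro j hj
    rw [hrec j]
    have h1 := hsp j
    have hf0 : f j = 0 := by
      have h2 := hy0 j
      have h3 := hy1 j
      have h4 := hs1 j
      have h5 := hs0 j
      rw [hj] at h1
      have : f j < 1 := by
        by_contra hh
        nlinarith
      have : -1 < f j := by
        by_contra hh
        nlinarith
      omega
    rw [hf0, hj] at h1
    have := hy0 j
    rw [hj]
    nlinarith
  refine ⟨?_, ?_⟩
  · intro j hj
    have h1 := hsp j
    rw [hf j hj] at h1
    have h2 : s j < c j * N := by have := hy1 j; nlinarith
    have h3 := hrec j
    have h4 : c j * N ≤ Q - 1 := by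
      have := hc1 j
      nlinarith
    have h5 := hs0 (j+1)
    by_contra hh
    have h6 : c j + 1 ≤ c (j+1) := by omega
    nlinarith [mul_nonneg (sub_nonneg.2 h6) (by nlinarith : 0 ≤ Q)]
  intro j0 hj0
  have key : ∀ r : ℕ, (r : ℤ) ≤ q - 2 → ∀ t : ℕ, t ≤ d →
      (q - 1 - r) * (Q + N) < c (j0 + r * (d+1) + t + 1) * Q + s (j0 + r * (d+1) + t + 1)
        + B * q ^ (t+1) := by
    have step1 : ∀ (J : ℕ) (K : ℤ) (t : ℕ), K ≤ q - 1 →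
        K * (Q + N) < c J * Q + s J + B * q ^ (t+1) →
        K * (Q + N) < c (J+1) * Q + s (J+1) + B * q ^ (t+1+1) := by
      intro J K t hK h
      have hqt : 1 ≤ q ^ t := one_le_pow₀ (by linarith)
      have hqt1 : q * B ≤ B * q ^ (t+1+1) := by
        have : B * q ^ (t+1+1) = q * B * (q * q ^ t) := by ring
        rw [this]
        have : 1 ≤ q * q ^ t := by nlinarith
        have : 0 < q * B := by nlinarith
        nlinarith
      rcases (hc0 J).eq_or_lt with hc | hc
      · have := hzero J hc.symm
        nlinarith
      have hc : 1 ≤ c J := hc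
      by_cases hcK : K + 1 ≤ c J
      · have := hlow J hc
        nlinarith
      · have hcK : c J ≤ K := by omega
        rw [hR J hc]
        have h1 := hsp J
        rw [hf J hc] at h1
        have h2 : (K - c J + 1) * (Q + N) < y J + B * q ^ (t+1) := by linarith
        have h3 : B * q ^ (t+1+1) = q * (B * q ^ (t+1)) := by ring
        rw [h3]
        have h4 : 0 ≤ (q - 1) * (K - c J) * (Q + N) :=
          mul_nonneg (mul_nonneg (by linarith) (by linarith)) hQN.le
        nlinarith
    have step2 : ∀ (J : ℕ) (K : ℤ), K ≤ q - 1 →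
        K * (Q + N) < c J * Q + s J + B * q ^ (d+1) →
        (K-1) * (Q + N) < c (J+1) * Q + s (J+1) + B * q ^ (0+1) := by
      intro J K hK h
      rw [zero_add, pow_one]
      rcases (hc0 J).eq_or_lt with hc | hc
      · have := hzero J hc.symm
        have h2 : (K - 1) * (Q + N) ≤ (q - 1) * (Q + N) :=
          mul_le_mul_of_nonneg_right (by linarith) hQN.le
        linarith
      have hc : 1 ≤ c J := hc
      by_cases hcK : K ≤ c J
      · have := hlow J hc
        have h2 : (K - 1) * (Q + N) ≤ (c J - 1) * (Q + N) :=
          mul_le_mul_of_nonneg_right (by linarith) hQN.le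
        linarith
      · exfalso
        have hcK : c J + 1 ≤ K := by omega
        have h1 := hsp J
        rw [hf J hc] at h1
        rw [← hQ] at h
        have := hy1 J
        nlinarith
    intro r
    induction r with
    | zero =>
      intro _ t
      induction t with
      | zero =>
        intro _
        have := hzero j0 hj0
        simp only [Nat.zero_mul, Nat.add_zero, zero_add, pow_one, Nat.cast_zero]
        linarith
      | succ t ih =>
        intro ht
        exact step1 _ _ t (by simp) (ih (by omega))
    | succ r ihr =>
      intro hr t
      push_cast at hr
      induction t with
      | zero =>
        intro _
        have hr0 : (0:ℤ) ≤ r := by positivity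
        have := step2 _ _ (by linarith) (ihr (by linarith) d le_rfl)
        have e1 : j0 + (r + 1) * (d+1) + 0 + 1 = j0 + r * (d+1) + d + 1 + 1 := by ring
        rw [e1]
        push_cast
        convert this using 2
        ring
      | succ t ih =>
        intro ht
        exact step1 _ _ t (by push_cast; linarith) (ih (by omega))
  intro j hj1 hj2 hcj
  obtain ⟨j, rfl⟩ : ∃ k, j = k + 1 := ⟨j - 1, by omega⟩
  have hdm := Nat.div_add_mod j (d+1)
  have hml := Nat.mod_lt j (Nat.succ_pos d)
  set r := j / (d+1) with hr
  set t := j % (d+1) with ht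
  have hJ : j0 + (j + 1) = j0 + r * (d+1) + t + 1 := by
    rw [← hdm]; ring
  have hjz : (j : ℤ) = (d+1) * r + t := by
    rw [← hdm]; push_cast; ring
  push_cast at hj2
  have hrq : (r : ℤ) ≤ q - 2 := by
    by_contra hh
    have : q - 1 ≤ r := by omega
    have : (q - 1) * ((d : ℤ) + 1) ≤ r * (d + 1) :=
      mul_le_mul_of_nonneg_right this (by positivity)
    have : (0:ℤ) ≤ t := by positivity
    nlinarith
  have hk := key r hrq t (by omega)
  rw [← hJ, hcj] at hk
  have hsJ := hs1 (j0 + (j+1))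
  by_cases h3 : (r : ℤ) ≤ q - 3
  · have : q ^ (t+1) ≤ q ^ (d+1) := pow_le_pow_right₀ (by linarith) (by omega)
    have : B * q ^ (t+1) ≤ Q := by rw [hQ]; exact mul_le_mul_of_nonneg_left this (by linarith)
    have h7 : 2 * (Q + N) ≤ (q - 1 - r) * (Q + N) :=
      mul_le_mul_of_nonneg_right (by linarith) hQN.le
    linarith
  · have hr2 : (r : ℤ) = q - 2 := by omega
    have htd : t < d := by
      have : (t : ℤ) < d := by
        rw [hjz, hr2] at hj2
        nlinarith
      exact_mod_cast this
    have : q ^ (t+1+1) ≤ q ^ (d+1) := pow_le_pow_right₀ (by linarith) (by omega)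
    have : B * q ^ (t+1+1) ≤ Q := by rw [hQ]; exact mul_le_mul_of_nonneg_left this (by linarith)
    have h5 : q * (B * q ^ (t+1)) ≤ Q := by
      calc q * (B * q ^ (t+1)) = B * q ^ (t+1+1) := by ring
        _ ≤ Q := this
    rw [hr2] at hk
    have h8 : Q + N < s (j0 + (j+1)) + B * q ^ (t+1) := by linarith
    have h9 := mul_lt_mul_of_pos_left h8 (by linarith : 0 < q)
    have h10 := mul_le_mul_of_nonneg_left (by linarith : s (j0 + (j+1)) ≤ Q - 1) (by linarith : 0 ≤ q)
    have h11 : 0 ≤ N := by linarith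
    linarith

/-- One-step rotation of the base `q` digits, `Q = q ^ (m - 1)`. -/
def rotSeq (q Q i : ℕ) : ℕ → ℕ
  | 0 => i
  | j + 1 => q * (rotSeq q Q i j % Q) + rotSeq q Q i j / Q

theorem rotSeq_lt (q Q i : ℕ) (hQ : 0 < Q) (hq : 0 < q) (hi : i < q * Q) (j : ℕ) :
    rotSeq q Q i j < q * Q := by
  induction j with
  | zero => exact hi
  | succ j ih =>
    have h1 : rotSeq q Q i j / Q < q := Nat.div_lt_of_lt_mul (by rwa [mul_comm])
    have h2 := Nat.mod_lt (rotSeq q Q i j) hQ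
    simp only [rotSeq]
    nlinarith

theorem rotSeq_mod (q Q i n p : ℕ) (hn : p * n + 1 = q * Q) (j : ℕ) :
    rotSeq q Q i j % n = i * q ^ j % n := by
  induction j with
  | zero => simp [rotSeq]
  | succ j ih =>
    have h1 := Nat.div_add_mod (rotSeq q Q i j) Q
    have h2 : rotSeq q Q i (j+1) + n * (p * (rotSeq q Q i j / Q)) = rotSeq q Q i j * q := by
      simp only [rotSeq]
      set x := rotSeq q Q i j
      calc _ = q * (x % Q) + (x / Q) * (p * n + 1) := by ring
        _ = (Q * (x / Q) + x % Q) * q := by rw [hn]; ring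
        _ = _ := by rw [h1]
    rw [← Nat.add_mul_mod_self_left (rotSeq q Q i (j+1)) n (p * (rotSeq q Q i j / Q)), h2,
      Nat.mul_mod, ih, ← Nat.mul_mod, pow_succ, mul_assoc]

theorem rotSeq_closed (q M i : ℕ) (hq : 0 < q) (j k : ℕ) (hjk : j + k = M + 1) :
    rotSeq q (q ^ M) i j = (i % q ^ k) * q ^ j + i / q ^ k ∨ i ≥ q ^ (M+1) := by
  by_cases hi : i ≥ q ^ (M+1)
  · exact Or.inr hi
  left
  push Not at hi
  induction j generalizing k with
  | zero =>
    have : k = M + 1 := by omega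
    subst this
    simp [rotSeq, Nat.mod_eq_of_lt hi, Nat.div_eq_of_lt hi]
  | succ j ih =>
    have h0 := ih (k+1) (by omega)
    have hM : M = j + k := by omega
    subst hM
    have hqk : 0 < q ^ k := Nat.pow_pos hq
    have hqj : 0 < q ^ j := Nat.pow_pos hq
    set A := i / q ^ (k+1) with hA
    set T := i % q ^ k with hT
    set c := i / q ^ k % q with hc
    have e1 : i % q ^ (k+1) = T + q ^ k * c := by
      rw [pow_succ, Nat.mod_mul]
    have e2 : i / q ^ k = q * A + c := by
      rw [hA, pow_succ, ← Nat.div_div_eq_div_mul, hc, Nat.div_add_mod]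
    have hTl : T < q ^ k := Nat.mod_lt _ hqk
    have hAl : A < q ^ j := by
      rw [hA]
      apply Nat.div_lt_of_lt_mul
      calc i < _ := hi
        _ = _ := by ring
    have h1 : rotSeq q (q ^ (j+k)) i j = q ^ (j+k) * c + (T * q ^ j + A) := by
      rw [h0, e1]; ring
    have h2 : T * q ^ j + A < q ^ (j+k) := by
      calc T * q ^ j + A < T * q ^ j + q ^ j := by omega
        _ = (T + 1) * q ^ j := by ring
        _ ≤ q ^ k * q ^ j := Nat.mul_le_mul_right _ hTl
        _ = _ := by ring
    simp only [rotSeq]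
    rw [h1, Nat.mul_add_mod, Nat.mod_eq_of_lt h2, Nat.mul_add_div (Nat.pow_pos hq),
      Nat.div_eq_of_lt h2, e2]
    ring

theorem rotSeq_digit (q M i : ℕ) (hq : 0 < q) (hi : i < q ^ (M+1)) (j k : ℕ)
    (hjk : j + k = M) :
    rotSeq q (q ^ M) i j / q ^ M = i / q ^ k % q := by
  have h := (rotSeq_closed q M i hq j (k+1) (by omega)).resolve_right (by omega)
  have hAl : i / q ^ (k+1) < q ^ j := by
    apply Nat.div_lt_of_lt_mul
    calc i < _ := hi
      _ = _ := by rw [← hjk]; ring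
  have hqj : 0 < q ^ j := Nat.pow_pos hq
  rw [h, ← hjk, pow_add q j k, ← Nat.div_div_eq_div_mul, mul_comm, Nat.mul_add_div hqj,
    Nat.div_eq_of_lt hAl, add_zero, pow_succ, Nat.mod_mul_right_div_self]


/-- For q > 3, m ≥ q, m-1 = a(q-1)+b, n = (q^m-1)/(q-1): if i is a q-cyclotomic
coset leader modulo n with q-adic digits i_ℓ = (i / q^ℓ) % q, then i_{m-1} = 0;
moreover, with ε = a+1 if b = q-2 and ε = a otherwise, if i_ℓ = q-1 for all
m-1-ε ≤ ℓ ≤ m-2, then 1 ≤ i_{ℓ-1} ≤ i_ℓ for all 1 ≤ ℓ ≤ m-2. -/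
theorem stmt_15 (q m a b n i : ℕ) (hq : ∃ p k : ℕ, p.Prime ∧ 0 < k ∧ q = p ^ k)
    (hq3 : 3 < q) (hmq : q ≤ m) (ha : 1 ≤ a) (hb : b ≤ q - 2)
    (hab : m - 1 = a * (q - 1) + b)
    (hn : n = (q ^ m - 1) / (q - 1))
    (hi1 : 1 ≤ i) (hi2 : i ≤ n - 1)
    (hleader : ∀ j : ℕ, i ≤ i * q ^ j % n) :
    (i / q ^ (m - 1)) % q = 0 ∧
    (let ε : ℕ := if b = q - 2 then a + 1 else a
     (∀ ℓ : ℕ, m - 1 - ε ≤ ℓ → ℓ ≤ m - 2 → (i / q ^ ℓ) % q = q - 1) →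
      ∀ ℓ : ℕ, 1 ≤ ℓ → ℓ ≤ m - 2 →
        1 ≤ (i / q ^ (ℓ - 1)) % q ∧ (i / q ^ (ℓ - 1)) % q ≤ (i / q ^ ℓ) % q) := by
  obtain ⟨M, rfl⟩ : ∃ M, m = M + 1 := ⟨m - 1, by omega⟩
  obtain ⟨p, rfl⟩ : ∃ p, q = p + 1 := ⟨q - 1, by omega⟩
  simp only [Nat.add_sub_cancel] at *
  have e2 : p + 1 - 2 = p - 1 := by omega
  have e3 : M + 1 - 2 = M - 1 := by omega
  rw [e2] at hb ⊢
  rw [e3]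
  obtain ⟨N, hN⟩ : ∃ N, (p + 1) ^ M = p * N + 1 := by
    have h := Nat.sub_dvd_pow_sub_pow (p + 1) 1 M
    simp only [Nat.add_sub_cancel, one_pow] at h
    obtain ⟨N, h⟩ := h
    have : 0 < (p+1)^M := by positivity
    exact ⟨N, by omega⟩
  have hpn : (p + 1) ^ (M+1) - 1 = p * ((p + 1) * N + 1) := by
    rw [pow_succ, hN]
    have : (p * N + 1) * (p + 1) = p * ((p + 1) * N + 1) + 1 := by ring
    omega
  rw [hpn, Nat.mul_div_cancel_left _ (by omega)] at hn
  have hnQ : n = (p + 1) ^ M + N := by rw [hN, hn]; ring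
  have hQpos : 0 < (p+1)^M := by positivity
  have hiQ : i < (p + 1) ^ M := by
    by_contra hge
    push Not at hge
    obtain ⟨r, rfl⟩ := Nat.exists_eq_add_of_le hge
    have hrN : r + 1 ≤ N := by omega
    have h1 := hleader 1
    rw [pow_one] at h1
    have h2 : ((p + 1) ^ M + r) * (p + 1) = ((p + 1) * r + 1) + n * p := by
      rw [hn, hN]; ring
    rw [h2, Nat.add_mul_mod_self_left, Nat.mod_eq_of_lt (by rw [hn]; nlinarith), hN] at h1
    nlinarith
  have hi' : i < (p + 1) ^ (M+1) := hiQ.trans_le (Nat.pow_le_pow_right (by omega) (by omega))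
  have htop : i / (p + 1) ^ M % (p + 1) = 0 := by simp [Nat.div_eq_of_lt hiQ]
  refine ⟨htop, ?_⟩
  generalize hε : (if b = p - 1 then a + 1 else a) = ε
  intro hdig l hl1 hl2
  have hε1 : 1 ≤ ε := by rw [← hε]; split_ifs <;> omega
  have hεM : ε ≤ M := by
    have : a * 3 ≤ a * p := Nat.mul_le_mul_left _ (by omega)
    rw [← hε]; split_ifs <;> omega
  have hMε : M + 1 < 2 * (p * ε) := by
    have h0 : p ≤ a * p := Nat.le_mul_of_pos_left _ ha
    rw [← hε]; split_ifs
    · have : p * (a + 1) = a * p + p := by ring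
      omega
    · have : p * a = a * p := by ring
      omega
  have hlow : ∀ t, t ≤ ε → (p + 1) ^ t ≤ i / (p + 1) ^ (M - t) + 1 := by
    intro t
    induction t with
    | zero => intro _; simp
    | succ t ih =>
      intro ht
      have h1 := ih (by omega)
      have h2 := hdig (M - (t + 1)) (by omega) (by omega)
      have h3 : (p + 1) ^ (M - t) = (p+1) ^ (M - (t+1)) * (p + 1) := by
        rw [← pow_succ]; congr 1; omega
      rw [h3, ← Nat.div_div_eq_div_mul] at h1
      have h4 := Nat.div_add_mod (i / (p + 1) ^ (M - (t + 1))) (p + 1)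
      rw [h2] at h4
      rw [pow_succ, ← h4]
      nlinarith
  have hBi : (p + 1) ^ M ≤ i + (p + 1) ^ (M - ε) := by
    have h1 := hlow ε le_rfl
    have h2 := Nat.div_mul_le_self i ((p + 1) ^ (M - ε))
    calc (p + 1) ^ M = (p + 1) ^ ε * (p + 1) ^ (M - ε) := by rw [← pow_add]; congr 1; omega
      _ ≤ (i / (p + 1) ^ (M - ε) + 1) * (p + 1) ^ (M - ε) := Nat.mul_le_mul_right _ h1
      _ ≤ _ := by rw [add_mul]; omega
  have hBε : (p + 1) ^ M = (p + 1) ^ (M - ε) * (p + 1) ^ ε := by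
    rw [← pow_add]; congr 1; omega
  have hBpos : 0 < (p + 1) ^ (M - ε) := by positivity
  set Q := (p + 1) ^ M with hQ
  set R := rotSeq (p + 1) Q i with hR
  have hRlt := rotSeq_lt (p + 1) Q i hQpos (by omega) (by rw [hQ, mul_comm, ← pow_succ]; exact hi')
  have hRmod := rotSeq_mod (p + 1) Q i n p (by rw [hn, hN]; ring)
  have hnpos : 0 < n := by omega
  obtain ⟨mono, nz⟩ := aux_nz ((p + 1 : ℕ) : ℤ) Q N i ((p + 1) ^ (M - ε) : ℕ) ε hε1
    (by exact_mod_cast hq3) (by exact_mod_cast hBpos) (by exact_mod_cast hBε)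
    (by rw [hN]; push_cast; ring) (by have : (Q : ℤ) ≤ i + ((p + 1) ^ (M - ε) : ℕ) := by exact_mod_cast hBi
                                      linarith)
    (fun j => ((R j / Q : ℕ) : ℤ)) (fun j => ((R j % Q : ℕ) : ℤ))
    (fun j => ((R j / n : ℕ) : ℤ)) (fun j => ((R j % n : ℕ) : ℤ))
    (fun j => by positivity)
    (fun j => by
      have : R j / Q < p + 1 := Nat.div_lt_of_lt_mul (by rw [mul_comm]; exact hRlt j)
      have : R j / Q ≤ p := by omega
      have : ((R j / Q : ℕ) : ℤ) ≤ p := by exact_mod_cast this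
      push_cast at this ⊢
      linarith)
    (fun j => by positivity)
    (fun j => by exact_mod_cast Nat.mod_lt _ hQpos)
    (fun j => by
      have h1 := Nat.div_add_mod' (R j) Q
      have h2 := Nat.div_add_mod' (R j) n
      have h3 : R j / Q * Q + R j % Q = R j / n * (Q + N) + R j % n := by
        rw [← hnQ, h1, h2]
      exact_mod_cast h3)
    (fun j => by
      have : i ≤ R j % n := by rw [hRmod j]; exact hleader j
      exact_mod_cast this)
    (fun j => by
      have : R j % n < Q + N := by rw [← hnQ]; exact Nat.mod_lt _ hnpos
      exact_mod_cast this)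
    (fun j => by
      have h1 := Nat.div_add_mod' (R (j+1)) Q
      have h3 : R (j+1) / Q * Q + R (j+1) % Q = (p + 1) * (R j % Q) + R j / Q := by
        rw [h1, hR]; rfl
      exact_mod_cast h3)
  have hd : ∀ j k, j + k = M → R j / Q = i / (p + 1) ^ k % (p + 1) :=
    fun j k h => rotSeq_digit (p + 1) M i (by omega) hi' j k h
  have hc0 : R 0 / Q = 0 := by rw [hd 0 M (by omega)]; exact htop
  have hcm : R (M + 1) / Q = 0 := by
    have h := (rotSeq_closed (p + 1) M i (by omega) (M+1) 0 (by omega)).resolve_right (by omega)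
    have h' : R (M + 1) = i := by
      rw [hR, hQ, h]; simp [Nat.mod_one]
    rw [h']; exact Nat.div_eq_of_lt hiQ
  have hall : ∀ t, 1 ≤ t → t ≤ M → R t / Q ≠ 0 := by
    intro t ht1 ht2 h0
    have h1 : p * ε ≤ t := by
      by_contra hh
      push Not at hh
      refine nz 0 (by simp [hc0]) t ht1 ?_ (by simp [h0])
      have : (t : ℤ) < p * ε := by exact_mod_cast hh
      push_cast
      linarith
    have h2 : p * ε ≤ M + 1 - t := by
      by_contra hh
      push Not at hh
      refine nz t (by simp [h0]) (M + 1 - t) (by omega) ?_ ?_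
      · have : ((M + 1 - t : ℕ) : ℤ) < p * ε := by exact_mod_cast hh
        push_cast at this ⊢
        linarith
      · have : t + (M + 1 - t) = M + 1 := by omega
        simp [this, hcm]
    omega
  have g1 := hd (M - l) l (by omega)
  have g2 := hd (M - l + 1) (l - 1) (by omega)
  rw [← g1, ← g2]
  refine ⟨Nat.pos_of_ne_zero (hall _ (by omega) (by omega)), ?_⟩
  have h1 := Nat.pos_of_ne_zero (hall (M - l) (by omega) (by omega))
  have := mono (M - l) (by exact_mod_cast h1)
  exact_mod_cast this
end

section
/- Let q > 3 be an odd prime power and m = a(q-1) + 2 with a ≥ 1, and n = (q^m-1)/(q-1). Let A = (q-1)/2. Then the largest q-cyclotomic coset leader modulo n is δ = (q^m - 1 - q^{m-1} - Σ_{ℓ=1}^{A} q^{aℓ} - Σ_{ℓ=A+1}^{q-2} q^{aℓ+1})/(q-1), and its q-cyclotomic coset has size m/2. -/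
def gg (q a k : ℕ) : ℕ := ∑ i ∈ Finset.range k, q ^ (a * (i + 1))

lemma gg_succ (q a k : ℕ) : gg q a (k + 1) = gg q a k + q ^ (a * (k + 1)) := by
  simp [gg, Finset.sum_range_succ]

lemma gg_lt (q a : ℕ) (ha : 1 ≤ a) (hq : 2 ≤ q) (k : ℕ) : gg q a k + 1 ≤ q ^ (a * k + 1) := by
  induction k with
  | zero => simp [gg]; omega
  | succ k ih =>
    rw [gg_succ]
    have h1 : q ^ (a * k + 1) ≤ q ^ (a * (k + 1)) :=
      Nat.pow_le_pow_right (by omega) (by rw [Nat.mul_add]; omega)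
    have h2 : 2 * q ^ (a * (k + 1)) ≤ q ^ (a * (k + 1) + 1) := by
      rw [pow_succ, mul_comm]; exact Nat.mul_le_mul_left _ hq
    omega

lemma gg_add (q a b c : ℕ) : gg q a (b + c) = gg q a b + q ^ (a * b) * gg q a c := by
  unfold gg
  rw [Finset.sum_range_add, Finset.mul_sum]
  congr 1
  refine Finset.sum_congr rfl fun i _ => ?_
  rw [← pow_add]; congr 1; ring

lemma gg_div (q a : ℕ) (ha : 1 ≤ a) (c : ℕ) : ∃ u, gg q a c = q * u := by
  have : q ∣ gg q a c := Finset.dvd_sum fun i _ => dvd_pow_self q (by positivity)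
  exact this

/-- Proper rotations of the half-word are strictly smaller. -/
lemma rot_lt (q a A h l : ℕ) (ha : 1 ≤ a) (hA : 2 ≤ A) (hq : 2 ≤ q) (hh : h = a * A + 1)
    (hl : 0 < l) (hlh : l < h) : (gg q a A * q ^ l) % (q ^ h - 1) < gg q a A := by
  have hqh : q ^ h ≡ 1 [MOD (q ^ h - 1)] := by
    have : 1 ≤ q ^ h := Nat.one_le_pow _ _ (by omega)
    exact ((Nat.modEq_iff_dvd' this).2 dvd_rfl).symm
  suffices H : ∃ Y, Y < gg q a A ∧ gg q a A * q ^ l ≡ Y [MOD (q ^ h - 1)] by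
    obtain ⟨Y, h1, h2⟩ := H
    rw [h2]
    exact lt_of_le_of_lt (Nat.mod_le _ _) h1
  obtain ⟨c, b, hcb, hb⟩ : ∃ c b, l = a * c + b ∧ b < a :=
    ⟨l / a, l % a, (Nat.div_add_mod l a).symm, Nat.mod_lt _ ha⟩
  obtain ⟨u, hu⟩ := gg_div q a ha c
  have hcA : c ≤ A := by
    by_contra hc
    have : a * (A + 1) ≤ a * c := Nat.mul_le_mul_left _ (by omega)
    rw [Nat.mul_add] at this; omega
  obtain ⟨k, rfl⟩ := Nat.exists_eq_add_of_le hcA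
  have hule : u ≤ gg q a c := by rw [hu]; nlinarith
  -- rotation by a*c
  have hrot : gg q a (c + k) * q ^ (a * c) ≡ q ^ (a * c) * gg q a k + u [MOD (q ^ h - 1)] := by
    have e : gg q a (c + k) * q ^ (a * c) = q ^ (a * c) * gg q a k + q ^ h * u := by
      rw [add_comm c k, gg_add, hu, hh]
      ring
    rw [e]
    simpa using (Nat.ModEq.refl (q ^ (a * c) * gg q a k)).add (hqh.mul_right u)
  rcases Nat.eq_zero_or_pos b with rfl | hb0
  · refine ⟨q ^ (a * c) * gg q a k + u, ?_, by rw [hcb]; simpa using hrot⟩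
    rw [gg_add]
    have hc : 0 < c := by
      rcases Nat.eq_zero_or_pos c with rfl | h; simp at hcb; omega; exact h
    have : 0 < gg q a c := by
      obtain ⟨c', rfl⟩ : ∃ c', c = c' + 1 := ⟨c - 1, by omega⟩
      rw [gg_succ]; positivity
    have : u < gg q a c := by
      rw [hu] at this ⊢
      have : 0 < u := Nat.pos_of_mul_pos_left this
      nlinarith
    omega
  · have hk : 0 < k := by
      rcases Nat.eq_zero_or_pos k with rfl | h; simp at hh; omega; exact h
    obtain ⟨k, rfl⟩ : ∃ k', k = k' + 1 := ⟨k - 1, by omega⟩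
    obtain ⟨b, rfl⟩ : ∃ b', b = b' + 1 := ⟨b - 1, by omega⟩
    refine ⟨q ^ (b + 1) * (q ^ (a * c) * gg q a k + u) + q ^ b, ?_, ?_⟩
    · have e1 : q ^ (a * c) * gg q a k + u ≤ gg q a (c + k) := by rw [gg_add]; omega
      have e2 := gg_lt q a ha hq (c + k)
      have e3 : gg q a (c + (k + 1)) = gg q a (c + k) + q ^ (a * (c + (k + 1))) := gg_succ q a (c + k)
      have e4 : 0 < gg q a (c + k) := by
        obtain ⟨c', hc'⟩ : ∃ c', c + k = c' + 1 := ⟨c + k - 1, by omega⟩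
        rw [hc', gg_succ]; positivity
      have e5 : q ^ b ≤ q ^ (b + 1) := Nat.pow_le_pow_right (by omega) (by omega)
      have e6 : q ^ (b + 1) * (q ^ (a * c) * gg q a k + u + 1) ≤ q ^ (b + 1) * q ^ (a * (c + k) + 1) :=
        Nat.mul_le_mul_left _ (by omega)
      have e7 : q ^ (b + 1) * q ^ (a * (c + k) + 1) ≤ q ^ (a * (c + (k + 1))) := by
        rw [← pow_add]
        apply Nat.pow_le_pow_right (by omega)
        have : a * (c + (k + 1)) = a * (c + k) + a := by ring
        omega
      rw [Nat.mul_add, mul_one] at e6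
      omega
    · have : gg q a (c + (k + 1)) * q ^ l ≡ (q ^ (a * c) * gg q a (k + 1) + u) * q ^ (b + 1) [MOD (q ^ h - 1)] := by
        rw [hcb, pow_add, ← mul_assoc]
        exact hrot.mul_right _
      refine this.trans ?_
      have e : (q ^ (a * c) * gg q a (k + 1) + u) * q ^ (b + 1)
          = q ^ (b + 1) * (q ^ (a * c) * gg q a k + u) + q ^ h * q ^ b := by
        rw [gg_succ, hh]
        ring
      rw [e]
      simpa using (Nat.ModEq.refl (q ^ (b + 1) * (q ^ (a * c) * gg q a k + u))).add (hqh.mul_right (q ^ b))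

lemma key (q a A h m : ℕ) (ha : 1 ≤ a) (hA : 2 ≤ A) (hq : 2 ≤ q) (hh : h = a * A + 1)
    (hm : m = 2 * h) (x R : ℕ → ℕ) (hper : ∀ i, x (i + m) = x i)
    (hR : ∀ j, R j = ∑ i ∈ Finset.range m, q ^ (m - 1 - i) * x (j + i))
    (hcount : 2 * A ≤ ∑ i ∈ Finset.range m, x i) : ∃ j, (q ^ h + 1) * gg q a A ≤ R j := by
  by_contra! hlt
  have hm1 : m - 1 = h + a * A := by omega
  obtain ⟨B, rfl⟩ : ∃ B, A = B + 1 := ⟨A - 1, by omega⟩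
  have hT : (q ^ h + 1) * gg q a (B + 1) + 1 ≤ q ^ h * (gg q a (B + 1) + 1) := by
    have := gg_lt q a ha hq (B + 1)
    rw [← hh] at this
    rw [Nat.add_mul, Nat.mul_add]; omega
  have hT2 : q ^ h * (gg q a (B + 1) + 1) ≤ q ^ (m - 1) + q ^ (m - a) := by
    have := gg_lt q a ha hq B
    have e : m - a = h + (a * B + 1) := by rw [Nat.mul_add] at hh; omega
    rw [gg_succ, hm1, e, pow_add, pow_add, ← Nat.mul_add]
    apply Nat.mul_le_mul_left
    omega
  -- digits at most one
  have hx1 : ∀ j, x j ≤ 1 := by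
    intro j
    by_contra! hj
    have h1 : q ^ (m - 1) * x j ≤ R j := by
      rw [hR]
      have := Finset.single_le_sum (f := fun i => q ^ (m - 1 - i) * x (j + i))
        (fun _ _ => Nat.zero_le _) (Finset.mem_range.2 (show 0 < m by omega))
      simpa using this
    have h2 : q ^ (m - a) ≤ q ^ (m - 1) := Nat.pow_le_pow_right (by omega) (by omega)
    have h3 : q ^ (m - 1) * 2 ≤ q ^ (m - 1) * x j := Nat.mul_le_mul_left _ hj
    have := hlt j
    omega
  let P : ℕ → Prop := fun i => x i = 1
  have hPm : ∀ i, P (i + m) ↔ P i := fun i => by simp [P, hper]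
  have hcnt : ∀ n, Nat.count P n = ∑ i ∈ Finset.range n, x i := by
    intro n
    induction n with
    | zero => simp
    | succ n ih =>
      rw [Nat.count_succ, Finset.sum_range_succ, ih]
      have := hx1 n
      by_cases hn : x n = 1
      · simp [P, hn]
      · simp [P, hn]; omega
  have hcm : ∀ n, Nat.count P (n + m) = Nat.count P n + Nat.count P m := by
    intro n
    induction n with
    | zero => simp
    | succ n ih =>
      rw [show n + 1 + m = (n + m) + 1 by ring, Nat.count_succ, ih, Nat.count_succ]
      simp only [hPm]; omega
  set k := Nat.count P m with hk
  have hk2 : 2 * (B + 1) ≤ k := by rw [hk, hcnt]; exact hcount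
  have hex : ∃ i, P i := by
    by_contra! hno
    have : k = 0 := by
      rw [hk, Nat.count_iff_forall_not.2]; intro i _; exact hno i
    omega
  have hinf : {i | P i}.Infinite := by
    obtain ⟨i, hi⟩ := hex
    apply Set.infinite_of_not_bddAbove
    rintro ⟨b, hb⟩
    have : ∀ t, P (i + t * m) := by
      intro t
      induction t with
      | zero => simpa using hi
      | succ t ih => rw [Nat.add_mul, one_mul, ← add_assoc, hPm]; exact ih
    have h1 := hb (this (b + 1))
    have : b + 1 ≤ (b + 1) * m := Nat.le_mul_of_pos_right _ (by omega)
    omega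
  let p : ℕ → ℕ := Nat.nth P
  have hp : StrictMono p := Nat.nth_strictMono hinf
  have hpP : ∀ t, x (p t) = 1 := fun t => Nat.nth_mem_of_infinite hinf t
  have hpk : ∀ t, p (t + k) = p t + m := by
    intro t
    have h1 : P (p t + m) := (hPm _).2 (hpP t)
    have h2 := Nat.nth_count h1
    rw [hcm, show Nat.count P (p t) = t from Nat.count_nth_of_infinite hinf t] at h2
    exact h2
  have hp2 : ∀ t, p (t + 2 * (B + 1)) ≤ p t + m := fun t => by
    rw [← hpk]; exact hp.monotone (by omega)
  -- lower bound for rotations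
  have hlow : ∀ t K, (∀ i < K, p (t + i) < p t + m) →
      ∑ i ∈ Finset.range K, q ^ (m - 1 - (p (t + i) - p t)) ≤ R (p t) := by
    intro t K hK
    have hge : ∀ i, p t ≤ p (t + i) := fun i => hp.monotone (by omega)
    rw [hR]
    have hinj : Set.InjOn (fun i => p (t + i) - p t) (Finset.range K : Set ℕ) := by
      intro i _ j _ hij
      have h1 := hge i
      have h2 := hge j
      simp only at hij
      have : p (t + i) = p (t + j) := by omega
      have := hp.injective this
      omega
    calc ∑ i ∈ Finset.range K, q ^ (m - 1 - (p (t + i) - p t))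
        = ∑ i ∈ Finset.range K, q ^ (m - 1 - (p (t + i) - p t)) * x (p t + (p (t + i) - p t)) := by
          refine Finset.sum_congr rfl fun i _ => ?_
          rw [Nat.add_sub_cancel' (hge i), hpP, mul_one]
      _ = ∑ o ∈ (Finset.range K).image (fun i => p (t + i) - p t), q ^ (m - 1 - o) * x (p t + o) := by
          rw [Finset.sum_image hinj]
      _ ≤ _ := by
          apply Finset.sum_le_sum_of_subset
          intro o ho
          simp only [Finset.mem_image, Finset.mem_range] at ho ⊢
          obtain ⟨i, hi, rfl⟩ := ho
          have := hK i hi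
          have := hge i
          omega
  have hin : ∀ t i, i < 2 * (B + 1) → p (t + i) < p t + m := fun t i hi =>
    lt_of_lt_of_le (hp (show t + i < t + 2 * (B + 1) by omega)) (hp2 t)
  -- gaps at least a
  have H1 : ∀ t, p t + a ≤ p (t + 1) := by
    intro t
    by_contra! hg
    have h1 := hlow t 2 (fun i hi => hin t i (by omega))
    simp [Finset.sum_range_succ] at h1
    have h2 : q ^ (m - a) ≤ q ^ (m - 1 - (p (t + 1) - p t)) :=
      Nat.pow_le_pow_right (by omega) (by have := hp (show t < t + 1 by omega); omega)
    have := hlt (p t)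
    omega
  have H1' : ∀ t i, p t + a * i ≤ p (t + i) := by
    intro t i
    induction i with
    | zero => simp
    | succ i ih =>
      have := H1 (t + i)
      rw [Nat.mul_add, ← add_assoc t i 1]; omega
  have Htight : ∀ t K, p (t + K) ≤ p t + a * K → ∀ i ≤ K, p (t + i) = p t + a * i := by
    intro t K hK i hi
    have h1 := H1' t i
    have h2 := H1' (t + i) (K - i)
    rw [add_assoc, Nat.add_sub_cancel' hi] at h2
    have : a * K = a * i + a * (K - i) := by rw [← Nat.mul_add, Nat.add_sub_cancel' hi]
    omega
  have hsum : ∑ i ∈ Finset.range (B + 1), q ^ (a * (B + 1) - a * i) = gg q a (B + 1) := by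
    unfold gg
    rw [← Finset.sum_range_reflect]
    refine Finset.sum_congr rfl fun i hi => ?_
    rw [Finset.mem_range] at hi
    congr 1
    rw [← Nat.mul_sub]; congr 1; omega
  have hale : ∀ i, i ≤ B + 1 → a * i ≤ a * (B + 1) := fun i hi => Nat.mul_le_mul_left _ hi
  have H2 : ∀ t, p t + h ≤ p (t + (B + 1)) := by
    intro t
    by_contra! hg
    have h0 := Htight t (B + 1) (by omega)
    have h1 := hlow t (B + 1 + 1) (fun i hi => hin t i (by omega))
    have h2 : ∑ i ∈ Finset.range (B + 1 + 1), q ^ (m - 1 - (p (t + i) - p t))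
        = q ^ h * (gg q a (B + 1) + 1) := by
      rw [Finset.sum_range_succ, Nat.mul_add, ← hsum, Finset.mul_sum]
      congr 1
      · refine Finset.sum_congr rfl fun i hi => ?_
        rw [Finset.mem_range] at hi
        rw [h0 i (by omega), ← pow_add]
        congr 1
        have := hale i (by omega)
        omega
      · rw [h0 _ le_rfl, mul_one]; congr 1; omega
    have := hlt (p t)
    omega
  have H3 : ∀ t, p (t + (B + 1)) = p t + h := by
    intro t
    have h1 := H2 t
    have h2 := H2 (t + (B + 1))
    have h3 := hp2 t
    rw [show t + (B + 1) + (B + 1) = t + 2 * (B + 1) by ring] at h2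
    omega
  obtain ⟨t, ht⟩ : ∃ t, p t + a + 1 ≤ p (t + 1) := by
    by_contra! hno
    have : ∀ i, p i ≤ p 0 + a * i := by
      intro i
      induction i with
      | zero => simp
      | succ i ih => have := hno i; rw [Nat.mul_add]; omega
    have h1 := this (B + 1)
    have h2 := H3 0
    rw [zero_add] at h2
    omega
  have h0 := Htight (t + 1) B (by
    have := H3 t
    rw [show t + 1 + B = t + (B + 1) by ring, this, hh, Nat.mul_add]
    omega)
  have h1 := hlow (t + 1) (2 * (B + 1)) (hin (t + 1))
  have h2 : ∑ i ∈ Finset.range (2 * (B + 1)), q ^ (m - 1 - (p (t + 1 + i) - p (t + 1)))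
      = (q ^ h + 1) * gg q a (B + 1) := by
    rw [two_mul, Finset.sum_range_add, Nat.add_mul, one_mul, ← hsum, Finset.mul_sum]
    congr 1
    · refine Finset.sum_congr rfl fun i hi => ?_
      rw [Finset.mem_range] at hi
      rw [h0 i (by omega), ← pow_add]
      congr 1
      have := hale i (by omega)
      omega
    · refine Finset.sum_congr rfl fun i hi => ?_
      rw [Finset.mem_range] at hi
      rw [show t + 1 + (B + 1 + i) = t + 1 + i + (B + 1) by ring, H3, h0 i (by omega)]
      congr 1
      have := hale i (by omega)
      omega
  have := hlt (p (t + 1))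
  omega

lemma gg_lt_two (q a : ℕ) (ha : 1 ≤ a) (hq : 2 ≤ q) (k : ℕ) : gg q a k + 2 ≤ q ^ (a * k + 1) := by
  induction k with
  | zero => simpa [gg] using hq
  | succ k ih =>
    rw [gg_succ]
    have h1 : q ^ (a * k + 1) ≤ q ^ (a * (k + 1)) :=
      Nat.pow_le_pow_right (by omega) (by rw [Nat.mul_add]; omega)
    have h2 : 2 * q ^ (a * (k + 1)) ≤ q ^ (a * (k + 1) + 1) := by
      rw [pow_succ, mul_comm]; exact Nat.mul_le_mul_left _ hq
    omega

lemma pow_modEq_one (q h : ℕ) (hq : 1 ≤ q) : q ^ h ≡ 1 [MOD (q ^ h - 1)] := by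
  have : 1 ≤ q ^ h := Nat.one_le_pow _ _ (by omega)
  exact ((Nat.modEq_iff_dvd' this).2 dvd_rfl).symm

lemma exists_large_rotation (q a A h m T : ℕ) (ha : 1 ≤ a) (hA : 2 ≤ A) (hq : q = 2 * A + 1)
    (hh : h = a * A + 1) (hm : m = 2 * h) (hT0 : 0 < T) (hTN : T < q ^ m - 1) (hdvd : 2 * A ∣ T) :
    ∃ j, (q ^ h + 1) * gg q a A ≤ T * q ^ j % (q ^ m - 1) := by
  set N := q ^ m - 1 with hN
  have hN0 : 0 < N := by omega
  have hqN : q ^ m = N + 1 := by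
    have : 1 ≤ q ^ m := Nat.one_le_pow _ _ (by omega)
    omega
  have hone : q ^ m ≡ 1 [MOD N] := pow_modEq_one q m (by omega)
  let R : ℕ → ℕ := fun j => T * q ^ j % N
  let x : ℕ → ℕ := fun j => q * R j / N
  have hstep : ∀ j, q * R j = R (j + 1) + N * x j := by
    intro j
    have h1 : R (j + 1) = q * R j % N := by
      simp only [R]
      rw [pow_succ, ← mul_assoc, mul_comm q, Nat.mod_mul_mod]
    rw [h1]; exact (Nat.mod_add_div _ _).symm
  have hRper : ∀ j, R (j + m) = R j := by
    intro j
    have : T * q ^ (j + m) ≡ T * q ^ j [MOD N] := by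
      rw [pow_add, ← mul_assoc]
      simpa using hone.mul_left (T * q ^ j)
    exact this
  have htel : ∀ j k, q ^ k * R j = R (j + k) + N * ∑ i ∈ Finset.range k, q ^ (k - 1 - i) * x (j + i) := by
    intro j k
    induction k with
    | zero => simp
    | succ k ih =>
      have e : ∑ i ∈ Finset.range k, q ^ (k + 1 - 1 - i) * x (j + i)
          = q * ∑ i ∈ Finset.range k, q ^ (k - 1 - i) * x (j + i) := by
        rw [Finset.mul_sum]
        refine Finset.sum_congr rfl fun i hi => ?_
        rw [Finset.mem_range] at hi
        rw [← mul_assoc, ← pow_succ']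
        congr 2; omega
      rw [Finset.sum_range_succ, e, pow_succ', mul_assoc, ih, Nat.mul_add, hstep]
      simp only [Nat.add_sub_cancel, Nat.sub_self, pow_zero, one_mul, ← add_assoc]
      ring
  have hR : ∀ j, R j = ∑ i ∈ Finset.range m, q ^ (m - 1 - i) * x (j + i) := by
    intro j
    have h1 := htel j m
    rw [hRper, hqN, Nat.add_mul, one_mul, add_comm] at h1
    exact Nat.eq_of_mul_eq_mul_left hN0 (Nat.add_left_cancel h1)
  have hxper : ∀ i, x (i + m) = x i := fun i => by simp only [x, hRper]
  have hR0 : R 0 = T := by simp only [R, pow_zero, mul_one]; exact Nat.mod_eq_of_lt hTN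
  have hcount : 2 * A ≤ ∑ i ∈ Finset.range m, x i := by
    have hT := hR 0
    rw [hR0] at hT
    simp only [zero_add] at hT
    apply Nat.le_of_dvd
    · rw [Nat.pos_iff_ne_zero]
      intro h0
      rw [Finset.sum_eq_zero_iff] at h0
      rw [Finset.sum_eq_zero (fun i hi => by rw [h0 i hi, mul_zero])] at hT
      omega
    · have hq1 : q ≡ 1 [MOD 2 * A] := by
        rw [hq]; simp [Nat.ModEq]
      have hmod : ∑ i ∈ Finset.range m, q ^ (m - 1 - i) * x i ≡ ∑ i ∈ Finset.range m, x i [MOD 2 * A] := by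
        apply Nat.ModEq.sum
        intro i _
        simpa using (hq1.pow (m - 1 - i)).mul_right (x i)
      rw [← hT] at hmod
      exact (hmod.dvd_iff dvd_rfl).1 hdvd
  exact key q a A h m ha hA (by omega) hh hm x R hxper hR hcount

lemma comp_mod (n d e x : ℕ) (hn : 0 < n) (hde : d + e = n) :
    d * x % n + e * x % n = 0 ∨ d * x % n + e * x % n = n := by
  have h1 := Nat.mod_lt (d * x) hn
  have h2 := Nat.mod_lt (e * x) hn
  have h3 : n ∣ d * x % n + e * x % n := by
    rw [Nat.dvd_iff_mod_eq_zero, ← Nat.add_mod, ← Nat.add_mul, hde, Nat.mul_mod_right]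
  obtain ⟨c, hc⟩ := h3
  have : c < 2 := by
    by_contra! h
    have : n * 2 ≤ n * c := Nat.mul_le_mul_left _ h
    omega
  interval_cases c <;> omega

lemma T0_dvd (q a A h : ℕ) (hq : q = 2 * A + 1) : 2 * A ∣ (q ^ h + 1) * gg q a A := by
  have hq1 : q ≡ 1 [MOD 2 * A] := by rw [hq]; simp [Nat.ModEq]
  have hg : gg q a A ≡ A [MOD 2 * A] := by
    have : gg q a A ≡ ∑ i ∈ Finset.range A, 1 [MOD 2 * A] := by
      apply Nat.ModEq.sum
      intro i _
      simpa using hq1.pow (a * (i + 1))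
    simpa using this
  have h2 : (q ^ h + 1) * gg q a A ≡ (1 + 1) * A [MOD 2 * A] := by
    apply Nat.ModEq.mul _ hg
    apply Nat.ModEq.add_right
    simpa using hq1.pow h
  exact (h2.dvd_iff dvd_rfl).2 (dvd_of_eq (by ring))


/-- For q > 3 an odd prime power, m = a(q-1)+2 with a ≥ 1, n = (q^m-1)/(q-1),
A = (q-1)/2: the largest q-cyclotomic coset leader modulo n is
δ = (q^m - 1 - q^{m-1} - Σ_{ℓ=1}^{A} q^{aℓ} - Σ_{ℓ=A+1}^{q-2} q^{aℓ+1})/(q-1),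
and its q-cyclotomic coset has size m/2. -/
theorem stmt_17 (q a A m n d : ℕ) (hq : ∃ p k : ℕ, p.Prime ∧ 0 < k ∧ q = p ^ k)
    (hqodd : Odd q) (hq3 : 3 < q) (ha : 1 ≤ a) (hm : m = a * (q - 1) + 2)
    (hA : A = (q - 1) / 2)
    (hn : n = (q ^ m - 1) / (q - 1))
    (hd : d = (q ^ m - 1 - q ^ (m - 1) - (∑ ℓ ∈ Finset.Icc 1 A, q ^ (a * ℓ))
        - ∑ ℓ ∈ Finset.Icc (A + 1) (q - 2), q ^ (a * ℓ + 1)) / (q - 1)) :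
    (∀ j : ℕ, d ≤ d * q ^ j % n) ∧
    (∀ s : ℕ, d < s → s < n → ¬ (∀ j : ℕ, s ≤ s * q ^ j % n)) ∧
    IsLeast {l : ℕ | 0 < l ∧ d * q ^ l ≡ d [MOD n]} (m / 2) := by

  have hqA : q = 2 * A + 1 := by obtain ⟨k, hk⟩ := hqodd; omega
  have hA2 : 2 ≤ A := by omega
  obtain ⟨h, hh⟩ : ∃ h, h = a * A + 1 := ⟨_, rfl⟩
  have hq1 : q - 1 = 2 * A := by omega
  have hm2 : m = 2 * h := by rw [hm, hh, hq1]; ring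
  have hmh : m / 2 = h := by omega
  rw [hmh]
  clear hm hA hqodd hq hmh
  rw [hq1] at hn hd
  obtain ⟨w, hw⟩ : ∃ w, w = gg q a A := ⟨_, rfl⟩
  have hsum1 : ∑ ℓ ∈ Finset.Icc 1 A, q ^ (a * ℓ) = w := by
    rw [hw, gg, Finset.range_eq_Ico, Finset.sum_Ico_add' (fun i => q ^ (a * i)) 0 A 1]
    rfl
  have hsum2 : q ^ (m - 1) + ∑ ℓ ∈ Finset.Icc (A + 1) (q - 2), q ^ (a * ℓ + 1) = q ^ h * w := by
    have e1 : Finset.Icc (A + 1) (q - 2) = Finset.Ico (A + 1) (2 * A) := by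
      ext i; simp only [Finset.mem_Icc, Finset.mem_Ico]; omega
    have e2 : m - 1 = a * (2 * A) + 1 := by
      have : a * (2 * A) = 2 * (a * A) := by ring
      omega
    rw [e1, e2, add_comm, ← Finset.sum_Ico_succ_top (by omega) (fun i => q ^ (a * i + 1)),
      Finset.sum_Ico_eq_sum_range, hw, gg, Finset.mul_sum,
      show 2 * A + 1 - (A + 1) = A by omega]
    refine Finset.sum_congr rfl fun i _ => ?_
    rw [← pow_add, hh]; congr 1; ring
  obtain ⟨M, hM⟩ : ∃ M, M = q ^ h - 1 := ⟨_, rfl⟩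
  have hwM : w < M := by
    have := gg_lt_two q a ha (by omega) A
    rw [← hh, ← hw] at this
    omega
  have hw0 : 0 < w := by
    obtain ⟨B, hB⟩ : ∃ B, A = B + 1 := ⟨A - 1, by omega⟩
    have : 0 < q ^ (a * (B + 1)) := Nat.pow_pos (by omega)
    rw [hw, hB, gg_succ]; omega
  have hqM : q ^ h = M + 1 := by omega
  have hN : q ^ m - 1 = (q ^ h + 1) * M := by
    rw [hm2, mul_comm 2 h, pow_mul, hqM]
    have : (M + 1) ^ 2 = (M + 1 + 1) * M + 1 := by ring
    omega
  have hndvd : 2 * A ∣ q ^ m - 1 := by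
    have := Nat.sub_dvd_pow_sub_pow q 1 m
    rwa [hq1, one_pow] at this
  have hNn : q ^ m - 1 = 2 * A * n := by rw [hn]; exact (Nat.mul_div_cancel' hndvd).symm
  obtain ⟨e, he⟩ := T0_dvd q a A h hqA
  rw [← hw] at he
  have hA0 : 0 < 2 * A := by omega
  have hen : e < n := by
    apply Nat.lt_of_mul_lt_mul_left (a := 2 * A)
    rw [← he, ← hNn, hN]
    exact Nat.mul_lt_mul_of_pos_left hwM (by omega)
  have he0 : 0 < e := by
    rw [Nat.pos_iff_ne_zero]; rintro rfl
    have : 0 < (q ^ h + 1) * w := by positivity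
    omega
  have hden : d + e = n := by
    have : q ^ m - 1 - q ^ (m - 1) - w - ∑ ℓ ∈ Finset.Icc (A + 1) (q - 2), q ^ (a * ℓ + 1)
        = 2 * A * (n - e) := by
      rw [Nat.mul_sub, ← hNn, ← he, Nat.add_mul, one_mul, ← hsum2]
      omega
    rw [hsum1, this, Nat.mul_div_cancel_left _ hA0] at hd
    omega
  have hn0 : 0 < n := by omega
  have hrot : ∀ j, 2 * A * (e * q ^ j % n) = (q ^ h + 1) * (w * q ^ j % M) := by
    intro j
    rw [← Nat.mul_mod_mul_left, ← Nat.mul_mod_mul_left, ← mul_assoc, ← mul_assoc, ← he, ← hN, hNn]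
  have hone : q ^ h ≡ 1 [MOD M] := by rw [hM]; exact pow_modEq_one q h (by omega)
  have hwper : ∀ k, w * q ^ (h * k) ≡ w [MOD M] := by
    intro k
    rw [pow_mul]
    simpa using (hone.pow k).mul_left w
  have hwmod : w % M = w := Nat.mod_eq_of_lt hwM
  have hsmall : ∀ l, 0 < l → l < h → w * q ^ l % M < w := by
    intro l h1 h2
    rw [hM, hw]
    exact rot_lt q a A h l ha hA2 (by omega) hh h1 h2
  have hle : ∀ j, w * q ^ j % M ≤ w := by
    intro j
    have h1 : w * q ^ j ≡ w * q ^ (j % h) [MOD M] := by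
      conv_lhs => rw [← Nat.div_add_mod j h, pow_add, ← mul_assoc]
      exact (hwper _).mul_right _
    rw [h1]
    rcases Nat.eq_zero_or_pos (j % h) with h0 | h0
    · rw [h0, pow_zero, mul_one]; exact Nat.mod_le _ _
    · exact (hsmall _ h0 (Nat.mod_lt _ (by omega))).le
  have hpos : ∀ j, w * q ^ j % M ≠ 0 := by
    intro j h0
    have h1 : M ∣ w * q ^ (h * j) := by
      have : j ≤ h * j := Nat.le_mul_of_pos_left _ (by omega)
      obtain ⟨i, hi⟩ := Nat.exists_eq_add_of_le this
      rw [hi, pow_add, ← mul_assoc]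
      exact (Nat.dvd_of_mod_eq_zero h0).mul_right _
    have h2 := ((hwper j).dvd_iff dvd_rfl).1 h1
    have := Nat.le_of_dvd hw0 h2
    omega
  have hsumn : ∀ j, d * q ^ j % n + e * q ^ j % n = n := by
    intro j
    rcases comp_mod n d e (q ^ j) hn0 hden with h0 | h0
    · exfalso
      have h1 : e * q ^ j % n = 0 := by omega
      have h2 := hrot j
      rw [h1, mul_zero] at h2
      rcases Nat.mul_eq_zero.1 h2.symm with h3 | h3
      · omega
      · exact hpos j h3
    · exact h0
  refine ⟨?_, ?_, ⟨?_, ?_⟩, ?_⟩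
  · intro j
    have h1 := hsumn j
    have h2 : e * q ^ j % n ≤ e := by
      apply Nat.le_of_mul_le_mul_left (c := 2 * A) _ hA0
      rw [hrot, ← he]
      exact Nat.mul_le_mul_left _ (hle j)
    omega
  · intro s hds hsn hlead
    obtain ⟨j, hj⟩ := exists_large_rotation q a A h m (2 * A * (n - s)) ha hA2 hqA hh hm2
      (Nat.mul_pos hA0 (by omega))
      (by rw [hNn]; exact Nat.mul_lt_mul_of_pos_left (by omega) hA0) (Dvd.intro _ rfl)
    rw [← hw, he, hNn, mul_assoc (2 * A) (n - s), Nat.mul_mod_mul_left] at hj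
    have h1 := Nat.le_of_mul_le_mul_left hj hA0
    have h2 := hlead j
    rcases comp_mod n s (n - s) (q ^ j) hn0 (by omega) with h0 | h0 <;> omega
  · omega
  · have h1 := hsumn h
    have h2 : e * q ^ h % n = e := by
      apply Nat.eq_of_mul_eq_mul_left hA0
      have := hwper 1
      rw [mul_one] at this
      rw [hrot, this, hwmod, he]
    change d * q ^ h % n = d % n
    rw [Nat.mod_eq_of_lt (show d < n by omega)]
    omega
  · rintro l ⟨hl0, hl⟩
    by_contra! hlh
    change d * q ^ l % n = d % n at hl
    rw [Nat.mod_eq_of_lt (show d < n by omega)] at hl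
    have h1 := hsumn l
    have h2 : e * q ^ l % n = e := by omega
    have h3 := hrot l
    rw [h2, ← he] at h3
    have h4 := Nat.eq_of_mul_eq_mul_left (by omega) h3
    have h5 := hsmall l hl0 hlh
    omega
end
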